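/- For every increment function δ of size n, the covering relations of the alt-Tamari poset Tam^δ_n are exactly the δ-rotations: for Dyck words P, Q of size n, Q covers P in Tam^δ_n if and only if Q is the δ-rotation of P at some up step of P. -/

import Mathlib

/-!
Common definitions.  A letter of a word is a `Bool`: `true` is an up step `u`,
`false` is a down step `d`.  Positions in words are 0-based.
-/

/-- A (possibly empty) Dyck word: as many `u`'s as `d`'s, and every
prefix has at least as many `u`'s as `d`'s. -/
def IsDyckPath (w : List Bool) : Prop :=
  w.count true = w.count false ∧ ∀ p, p <+: w → p.count false ≤ p.count true

/-- A Dyck word of size `n`: `n` up steps, `n` down steps, every prefix has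
at least as many `u`'s as `d`'s. -/
def IsDyckWord (n : ℕ) (w : List Bool) : Prop :=
  w.count true = n ∧ w.count false = n ∧ ∀ p, p <+: w → p.count false ≤ p.count true

/-- The set of Dyck words of size `n`. -/
def DyckSet (n : ℕ) : Set (List Bool) := {w | IsDyckWord n w}

/-- An increment function: a `{0,1}`-valued function (the paper's `δ : {1,…,n} → {0,1}`;
only the values on `{1,…,n}` are ever used). -/
def IsIncFun (δ : ℕ → ℤ) : Prop := ∀ i, δ i = 0 ∨ δ i = 1

/-- The 0-based position in `w` of the `i`-th up step `u_i` (`i` is 1-based). -/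
def upPos (w : List Bool) (i : ℕ) : ℕ :=
  ((List.range w.length).filter fun q => w.getD q false = true).getD (i - 1) 0

/-- `h_i(w)`: the (1-based, between 1 and 2n) position of the up step `u_i` in `w`. -/
def hpos (w : List Bool) (i : ℕ) : ℕ := upPos w i + 1

/-- The change of δ-altitude produced by the letter at position `q` of `w`:
the up step `u_i` contributes `δ i`, a down step contributes `-1`. -/
def stepVal (δ : ℕ → ℤ) (w : List Bool) (q : ℕ) : ℤ :=
  if w.getD q false = true then δ ((w.take (q + 1)).count true) else -1

/-- The δ-elevation of the factor of `w` occupying positions `a, …, b-1`. -/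
def elev (δ : ℕ → ℤ) (w : List Bool) (a b : ℕ) : ℤ :=
  ∑ q ∈ Finset.Ico a b, stepVal δ w q

/-- `C` is the δ-excursion of the up step of `w` at position `p`:
the smallest (nonempty) factor of `w` starting at `p` whose δ-elevation is `0`. -/
def IsDeltaExcAt (δ : ℕ → ℤ) (w : List Bool) (p : ℕ) (C : List Bool) : Prop :=
  w.getD p false = true ∧
  ∃ m, 0 < m ∧ p + m ≤ w.length ∧ C = (w.drop p).take m ∧
    elev δ w p (p + m) = 0 ∧ ∀ m', 0 < m' → m' < m → elev δ w p (p + m') ≠ 0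

/-- `C` is the excursion of the up step of `w` at position `p`: the smallest factor
of `w` starting at `p` that is itself a Dyck word. -/
def IsExcursionAt (w : List Bool) (p : ℕ) (C : List Bool) : Prop :=
  w.getD p false = true ∧
  ∃ m, 0 < m ∧ p + m ≤ w.length ∧ C = (w.drop p).take m ∧ IsDyckPath C ∧
    ∀ m', 0 < m' → m' < m → ¬ IsDyckPath ((w.drop p).take m')

/-- `ℓ_i(w; δ)`: the length of the δ-excursion of `u_i` in `w`. -/
noncomputable def excLen (δ : ℕ → ℤ) (w : List Bool) (i : ℕ) : ℕ :=
  sInf {m | 0 < m ∧ elev δ w (upPos w i) (upPos w i + m) = 0}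

/-- `Q` is the δ-rotation of `P` at some up step: `P = A d C B` with `d u_i` a valley
and `C` the δ-excursion of `u_i`, and `Q = A C d B`. -/
def DeltaRot (δ : ℕ → ℤ) (P Q : List Bool) : Prop :=
  ∃ A C B, P = A ++ false :: (C ++ B) ∧ Q = A ++ (C ++ false :: B) ∧
    IsDeltaExcAt δ P (A.length + 1) C

/-- The alt-Tamari order `Tam^δ`: reflexive transitive closure of δ-rotations. -/
def altLE (δ : ℕ → ℤ) : List Bool → List Bool → Prop :=
  Relation.ReflTransGen (DeltaRot δ)

/-- The Tamari order: the alt-Tamari order for `δ ≡ 1` (the δ-excursion of any up step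
is then its excursion). -/
def tamLE : List Bool → List Bool → Prop := altLE fun _ => 1

/-- The height (number of `u`'s minus number of `d`'s) of the length-`j` prefix of `w`. -/
def prefHeight (w : List Bool) (j : ℕ) : ℤ :=
  ((w.take j).count true : ℤ) - ((w.take j).count false : ℤ)

/-- The Dyck (inclusion) order: every prefix height of `P` is at most that of `Q`. -/
def dyckLE (P Q : List Bool) : Prop := ∀ j, prefHeight P j ≤ prefHeight Q j

/-- Strict version of a relation `le`. -/
def ltOf (le : List Bool → List Bool → Prop) (P Q : List Bool) : Prop :=
  le P Q ∧ ¬ le Q P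

/-- There is a strict chain `P = c 0 < c 1 < ⋯ < c k = Q` inside `S`. -/
def HasChainIn (S : Set (List Bool)) (le : List Bool → List Bool → Prop)
    (P Q : List Bool) (k : ℕ) : Prop :=
  ∃ c : ℕ → List Bool, c 0 = P ∧ c k = Q ∧ (∀ i ≤ k, c i ∈ S) ∧
    ∀ i < k, ltOf le (c i) (c (i + 1))

/-- The interval `[P,Q]` of the poset `(S, le)` has height `k`: `k` is the maximal
length of a chain from `P` to `Q`. -/
def IntervalHeight (S : Set (List Bool)) (le : List Bool → List Bool → Prop)
    (P Q : List Bool) (k : ℕ) : Prop :=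
  HasChainIn S le P Q k ∧ ∀ m, HasChainIn S le P Q m → m ≤ k

/-- The interval `[P,Q]` of the poset `(S, le)` is linear: it is totally ordered. -/
def LinearInterval (S : Set (List Bool)) (le : List Bool → List Bool → Prop)
    (P Q : List Bool) : Prop :=
  P ∈ S ∧ Q ∈ S ∧ le P Q ∧
  ∀ R R', R ∈ S → R' ∈ S → le P R → le R Q → le P R' → le R' Q → le R R' ∨ le R' R

/-- `Q` covers `P` in the poset `(S, le)`. -/
def CovIn (S : Set (List Bool)) (le : List Bool → List Bool → Prop)
    (P Q : List Bool) : Prop :=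
  P ∈ S ∧ Q ∈ S ∧ ltOf le P Q ∧ ∀ R ∈ S, ¬ (ltOf le P R ∧ ltOf le R Q)

/-- The number of valleys (factors `du`) of `w`. -/
def valleys (w : List Bool) : ℕ :=
  ((List.range w.length).filter fun q => !w.getD q true && w.getD (q + 1) false).length

/-- The number of down steps of `w` before its up step number `k` (0-based), or the total number
of down steps if there is no such up step. -/
def downsBefore : List Bool → ℕ → ℤ
  | [], _ => 0
  | false :: w, k => 1 + downsBefore w k
  | true :: _, 0 => 0
  | true :: w, k + 1 => downsBefore w k

/-- The δ-altitude of `w` just before its up step number `k` (0-based). -/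
def altBefore (δ : ℕ → ℤ) (w : List Bool) (k : ℕ) : ℤ :=
  ∑ i ∈ Finset.range k, δ (i + 1) - downsBefore w k

/-- The δ-altitude at the end of the word `w`. -/
def altEnd (δ : ℕ → ℤ) (w : List Bool) : ℤ :=
  ∑ i ∈ Finset.range (w.count true), δ (i + 1) - w.count false

/-- `k` belongs to the excursion of `a` for the altitude function `f`. -/
def InBlock (f : ℕ → ℤ) (a k : ℕ) : Prop :=
  a ≤ k ∧ ∀ l, a < l → l ≤ k → f a < f l

/-- `g` arises from the altitude function `f` by raising the excursion of `a` by one. -/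
def RaiseAt (a : ℕ) (f g : ℕ → ℤ) : Prop :=
  ∀ k, (InBlock f a k → g k = f k + 1) ∧ (¬ InBlock f a k → g k = f k)

/-- `g` arises from `f` by raising some excursion by one. -/
def Raise (f g : ℕ → ℤ) : Prop := ∃ a, RaiseAt a f g

lemma inBlock_self (f : ℕ → ℤ) (a : ℕ) : InBlock f a a :=
  ⟨le_rfl, fun _ h h' => absurd h (not_lt.2 h')⟩

lemma InBlock.trans {f : ℕ → ℤ} {a b c : ℕ} (hab : InBlock f a b) (hbc : InBlock f b c) :
    InBlock f a c := by
  refine ⟨hab.1.trans hbc.1, fun l hl hlc => ?_⟩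
  rcases le_or_gt l b with h | h
  · exact hab.2 l hl h
  · have hbl := hbc.2 l h hlc
    rcases hab.1.eq_or_lt with rfl | hlt
    · exact hbl
    · exact (hab.2 b hlt le_rfl).trans hbl

lemma RaiseAt.le {a : ℕ} {f g : ℕ → ℤ} (h : RaiseAt a f g) (k : ℕ) : f k ≤ g k := by
  by_cases hk : InBlock f a k
  · rw [(h k).1 hk]; omega
  · exact ((h k).2 hk).ge

lemma RaiseAt.unique {a : ℕ} {f g g' : ℕ → ℤ} (h : RaiseAt a f g) (h' : RaiseAt a f g') :
    g = g' := by
  funext k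
  by_cases hk : InBlock f a k
  · rw [(h k).1 hk, (h' k).1 hk]
  · rw [(h k).2 hk, (h' k).2 hk]

lemma le_of_reflTransGen_raise {f g : ℕ → ℤ} (h : Relation.ReflTransGen Raise f g) (k : ℕ) :
    f k ≤ g k := by
  induction h with
  | refl => exact le_rfl
  | tail _ hs ih => exact ih.trans (hs.choose_spec.le k)

/-- If `j` lies in the excursion of `i` and the altitude at `j` does not grow, then the altitude at
`i` does not grow either. -/
lemma reflTransGen_raise_apply_eq {h g : ℕ → ℤ} {i j : ℕ} (hs : Relation.ReflTransGen Raise h g)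
    (hb : InBlock h i j) (hj : g j ≤ h j) : g i = h i := by
  induction hs using Relation.ReflTransGen.head_induction_on with
  | refl => rfl
  | @head f f' hf hs ih =>
    obtain ⟨a, ha⟩ := hf
    have hfj : f' j ≤ f j := (le_of_reflTransGen_raise hs j).trans hj
    have hi : ¬ InBlock f a i := by
      intro hai
      have := (ha j).1 (hai.trans hb)
      omega
    have hfi := (ha i).2 hi
    rw [ih ⟨hb.1, fun l h1 h2 => ?_⟩ (hj.trans (ha.le j)), hfi]
    rw [hfi]
    exact (hb.2 l h1 h2).trans_le (ha.le l)

/-- Two different raisings of `f` are never comparable. -/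
lemma eq_of_raise_of_reflTransGen {f f' g : ℕ → ℤ} (h' : Raise f f') (hg : Raise f g)
    (hs : Relation.ReflTransGen Raise f' g) : f' = g := by
  obtain ⟨j, hj⟩ := h'
  obtain ⟨i, hi⟩ := hg
  have hfj := (hj j).1 (inBlock_self f j)
  have hfi := (hi i).1 (inBlock_self f i)
  have hle := le_of_reflTransGen_raise hs j
  have hij : InBlock f i j := by
    by_contra hn
    have := (hi j).2 hn
    omega
  rcases hij.1.eq_or_lt with rfl | hlt
  · exact hj.unique hi
  · have hfi' : f' i = f i := (hj i).2 fun hb => absurd hb.1 (not_le.2 hlt)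
    have hgj := (hi j).1 hij
    have := reflTransGen_raise_apply_eq hs
      ⟨hij.1, fun l h1 h2 => by rw [hfi']; exact (hij.2 l h1 h2).trans_le (hj.le l)⟩ (by omega)
    omega

lemma downsBefore_nonneg (w : List Bool) (k : ℕ) : 0 ≤ downsBefore w k := by
  fun_induction downsBefore w k <;> omega

lemma downsBefore_append_of_lt {A : List Bool} {k : ℕ} (B : List Bool) (h : k < A.count true) :
    downsBefore (A ++ B) k = downsBefore A k := by
  fun_induction downsBefore A k with
  | case1 => simp at h
  | case2 w k ih => simp_all [downsBefore]
  | case3 => simp [downsBefore]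
  | case4 w k ih => simp_all [downsBefore]

lemma downsBefore_append_add (A B : List Bool) (k : ℕ) :
    downsBefore (A ++ B) (A.count true + k) = A.count false + downsBefore B k := by
  induction A with
  | nil => simp
  | cons x A ih =>
    cases x
    · simp only [List.cons_append, downsBefore, ne_eq, Bool.false_eq_true, not_false_eq_true,
        List.count_cons_of_ne, List.count_cons_self, ih]
      push_cast; ring
    · have : (true :: A).count true + k = A.count true + k + 1 := by simp; omega
      rw [this]
      simp [downsBefore, ih]

/-- The prefix of `C` ending just before an up step. -/
lemma exists_prefix_downsBefore {C : List Bool} {r : ℕ} (h : r < C.count true) :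
    ∃ t < C.length, (C.take t).count true = r ∧ ((C.take t).count false : ℤ) = downsBefore C r := by
  fun_induction downsBefore C r with
  | case1 => simp at h
  | case2 w k ih =>
    obtain ⟨t, ht, h1, h2⟩ := ih (by simpa using h)
    exact ⟨t + 1, by simpa using ht, by simpa using h1, by simp [h2]; ring⟩
  | case3 => exact ⟨0, by simp⟩
  | case4 w k ih =>
    obtain ⟨t, ht, h1, h2⟩ := ih (by simpa using h)
    exact ⟨t + 1, by simpa using ht, by simpa using h1, by simpa using h2⟩

lemma altEnd_take_succ (δ : ℕ → ℤ) {w : List Bool} {q : ℕ} (hq : q < w.length) :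
    altEnd δ (w.take (q + 1)) = altEnd δ (w.take q) + stepVal δ w q := by
  unfold altEnd stepVal
  rw [List.take_succ_eq_append_getElem hq, List.getD_eq_getElem _ _ hq]
  cases h : w[q]
  · simp; ring
  · simp [Finset.sum_range_succ]; ring

lemma elev_eq_altEnd_sub (δ : ℕ → ℤ) {w : List Bool} (p m : ℕ) (h : p + m ≤ w.length) :
    elev δ w p (p + m) = altEnd δ (w.take (p + m)) - altEnd δ (w.take p) := by
  induction m with
  | zero => simp [elev]
  | succ m ih =>
    have := ih (by omega)
    unfold elev at *
    rw [← add_assoc, Finset.sum_Ico_succ_top (by omega), this, altEnd_take_succ δ (by omega)]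
    ring

lemma neg_one_le_stepVal {δ : ℕ → ℤ} (hδ : IsIncFun δ) (w : List Bool) (q : ℕ) :
    -1 ≤ stepVal δ w q := by
  unfold stepVal
  split_ifs
  · rcases hδ ((w.take (q + 1)).count true) with h | h <;> omega
  · exact le_rfl

/-- The δ-elevation stays positive strictly inside an excursion. -/
lemma elev_pos_of_ne_zero {δ : ℕ → ℤ} (hδ : IsIncFun δ) {w : List Bool} {p m : ℕ}
    (hp : w.getD p false = true)
    (hm : ∀ m', 0 < m' → m' < m → elev δ w p (p + m') ≠ 0) (t : ℕ) (h0 : 0 < t) (ht : t < m) :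
    0 < elev δ w p (p + t) := by
  induction t with
  | zero => omega
  | succ t ih =>
    have hne := hm _ h0 ht
    have hs : elev δ w p (p + (t + 1)) = elev δ w p (p + t) + stepVal δ w (p + t) := by
      unfold elev
      rw [← add_assoc, Finset.sum_Ico_succ_top (by omega)]
    rcases Nat.eq_zero_or_pos t with rfl | h
    · have h1 : elev δ w p (p + 0) = 0 := by simp [elev]
      have h2 : 0 ≤ stepVal δ w (p + 0) := by
        unfold stepVal
        rw [add_zero, if_pos hp]
        rcases hδ ((w.take (p + 1)).count true) with h | h <;> omega
      omega
    · have := ih h (by omega)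
      have := neg_one_le_stepVal hδ w (p + t)
      omega

lemma DeltaRot.raise {δ : ℕ → ℤ} (hδ : IsIncFun δ) {P Q : List Bool} (h : DeltaRot δ P Q) :
    Raise (altBefore δ P) (altBefore δ Q) := by
  obtain ⟨A, C, B, hP, hQ, hp, m, hm0, hml, hC, hm, hmin⟩ := h
  have hPA : P = (A ++ [false]) ++ (C ++ B) := by simp [hP]
  have hQA : Q = A ++ (C ++ ([false] ++ B)) := by simp [hQ]
  have hlen : (A ++ [false]).length = A.length + 1 := by simp
  have hCm : C.length = m := by
    rw [hC, List.length_take, List.length_drop]; omega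
  have htake (t : ℕ) (ht : t ≤ m) : P.take (A.length + 1 + t) = (A ++ [false]) ++ C.take t := by
    rw [hPA, ← hlen, List.take_length_add_append, List.take_append_of_le_length (by omega)]
  obtain ⟨C', rfl⟩ : ∃ C', C = true :: C' := by
    cases C with
    | nil => simp at hCm; omega
    | cons x C' =>
      rw [hPA, ← hlen] at hp
      simp at hp
      exact ⟨C', by rw [hp]⟩
  generalize hCdef : true :: C' = C at *
  set a := A.count true with ha
  have hcA : (A ++ [false]).count true = a := by simp [ha]
  have hfA : (A ++ [false]).count false = A.count false + 1 := by simp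
  have hc0 : 0 < C.count true := by rw [← hCdef]; simp
  have hdP (k : ℕ) : downsBefore P (a + k) = A.count false + 1 + downsBefore (C ++ B) k := by
    rw [hPA, ← hcA, downsBefore_append_add, hfA]; push_cast; ring
  have hdQ (k : ℕ) : downsBefore Q (a + k) = A.count false + downsBefore (C ++ ([false] ++ B)) k := by
    rw [hQA, downsBefore_append_add]
  have hdC : downsBefore (C ++ B) 0 = 0 := by rw [← hCdef]; simp [downsBefore]
  have hbase : altEnd δ (P.take (A.length + 1)) = altBefore δ P a := by
    have h0 := htake 0 (by omega)
    have h1 := hdP 0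
    rw [add_zero] at h0 h1
    simp only [altEnd, altBefore, h0, h1, hdC, List.take_zero, List.append_nil, hcA, hfA]
    push_cast; ring
  have hEnd (t : ℕ) (ht : t ≤ m) : altEnd δ (P.take (A.length + 1 + t)) =
      ∑ i ∈ Finset.range (a + (C.take t).count true), δ (i + 1)
        - (A.count false + 1 + (C.take t).count false) := by
    simp only [altEnd, htake t ht, List.count_append (l₂ := C.take t), hcA, hfA]
    push_cast; ring
  have hinner (r : ℕ) (h0 : 0 < r) (hr : r < C.count true) :
      altBefore δ P a < altBefore δ P (a + r) := by
    obtain ⟨t, htm, ht1, ht2⟩ := exists_prefix_downsBefore hr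
    have htpos : 0 < t := by
      rcases Nat.eq_zero_or_pos t with rfl | h
      · simp at ht1; omega
      · exact h
    have hpos := elev_pos_of_ne_zero hδ hp hmin t htpos (by omega)
    rw [elev_eq_altEnd_sub δ _ _ (by omega), hbase, hEnd t (by omega), ht1, ht2] at hpos
    have : altBefore δ P (a + r) = ∑ i ∈ Finset.range (a + r), δ (i + 1)
        - (A.count false + 1 + downsBefore C r) := by
      rw [altBefore, hdP, downsBefore_append_of_lt _ hr]
    omega
  have houter : altBefore δ P (a + C.count true) ≤ altBefore δ P a := by
    rw [elev_eq_altEnd_sub δ _ _ hml, hbase, hEnd m le_rfl, ← hCm, List.take_length] at hm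
    have h1 := downsBefore_append_add C B 0
    have h2 := downsBefore_nonneg B 0
    rw [add_zero] at h1
    rw [altBefore, hdP, h1]
    omega
  have hblock (k : ℕ) : InBlock (altBefore δ P) a k ↔ a ≤ k ∧ k < a + C.count true := by
    constructor
    · rintro ⟨h1, h2⟩
      refine ⟨h1, not_le.1 fun h => ?_⟩
      exact absurd (h2 _ (by omega) h) (not_lt.2 houter)
    · rintro ⟨h1, h2⟩
      refine ⟨h1, fun l hl hlk => ?_⟩
      obtain ⟨r, rfl⟩ := Nat.exists_eq_add_of_lt hl
      exact hinner (r + 1) (by omega) (by omega)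
  refine ⟨a, fun k => ?_⟩
  rw [hblock]
  rcases lt_or_ge k a with hk | hk
  · refine ⟨fun h => absurd h.1 (not_le.2 hk), fun _ => ?_⟩
    rw [altBefore, altBefore, hQ, hP, downsBefore_append_of_lt _ hk, downsBefore_append_of_lt _ hk]
  obtain ⟨r, rfl⟩ := Nat.exists_eq_add_of_le hk
  rw [altBefore, altBefore, hdP, hdQ]
  rcases lt_or_ge r (C.count true) with hr | hr
  · rw [downsBefore_append_of_lt _ hr, downsBefore_append_of_lt _ hr]
    exact ⟨fun _ => by ring, fun h => absurd ⟨hk, by omega⟩ h⟩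
  · obtain ⟨s, rfl⟩ := Nat.exists_eq_add_of_le hr
    rw [downsBefore_append_add, downsBefore_append_add]
    refine ⟨fun h => absurd h.2 (by omega), fun _ => ?_⟩
    simp only [List.singleton_append, downsBefore]
    ring

lemma DeltaRot.isDyckWord {n : ℕ} {δ : ℕ → ℤ} {P Q : List Bool} (h : DeltaRot δ P Q)
    (hP : IsDyckWord n P) : IsDyckWord n Q := by
  obtain ⟨A, C, B, rfl, rfl, -⟩ := h
  obtain ⟨h1, h2, h3⟩ := hP
  refine ⟨by simpa using h1, by rw [← h2]; simp; omega, fun p hp => ?_⟩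
  rcases List.prefix_or_prefix_of_prefix hp (List.prefix_append A _) with h | ⟨s, rfl⟩
  · exact h3 p (h.trans (List.prefix_append _ _))
  rw [List.prefix_append_right_inj] at hp
  rcases List.prefix_or_prefix_of_prefix hp (List.prefix_append C _) with h | ⟨t, rfl⟩
  · have := h3 (A ++ false :: s) <| by
      rw [List.prefix_append_right_inj, List.cons_prefix_cons]
      exact ⟨rfl, h.trans (List.prefix_append _ _)⟩
    simp at this ⊢
    omega
  · rw [List.prefix_append_right_inj] at hp
    cases t with
    | nil =>
      have := h3 (A ++ false :: C) (by simp [List.prefix_append_right_inj, List.cons_prefix_cons])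
      simp at this ⊢
      omega
    | cons x t =>
      obtain ⟨rfl, ht⟩ := List.cons_prefix_cons.1 hp
      have := h3 (A ++ false :: (C ++ t)) (by
        simpa [List.prefix_append_right_inj, List.cons_prefix_cons] using ht)
      simp at this ⊢
      omega

lemma altLE.reflTransGen_raise {δ : ℕ → ℤ} (hδ : IsIncFun δ) {P Q : List Bool} (h : altLE δ P Q) :
    Relation.ReflTransGen Raise (altBefore δ P) (altBefore δ Q) :=
  Relation.ReflTransGen.lift (altBefore δ) (fun _ _ hr => DeltaRot.raise hδ hr) _ _ h

lemma DeltaRot.not_altLE {δ : ℕ → ℤ} (hδ : IsIncFun δ) {P Q : List Bool} (h : DeltaRot δ P Q) :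
    ¬ altLE δ Q P := by
  intro hQP
  obtain ⟨a, ha⟩ := h.raise hδ
  have h1 := (ha a).1 (inBlock_self _ _)
  have h2 := le_of_reflTransGen_raise (hQP.reflTransGen_raise hδ) a
  omega

lemma altLE.eq_or_exists_deltaRot {δ : ℕ → ℤ} {P Q : List Bool} (h : altLE δ P Q) :
    P = Q ∨ ∃ R, DeltaRot δ P R ∧ altLE δ R Q :=
  Relation.ReflTransGen.cases_head h

lemma altLE.eq_of_altBefore_eq {δ : ℕ → ℤ} (hδ : IsIncFun δ) {P Q : List Bool} (h : altLE δ P Q)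
    (he : altBefore δ P = altBefore δ Q) : P = Q := by
  rcases h.eq_or_exists_deltaRot with h | ⟨R, hR, hRQ⟩
  · exact h
  · obtain ⟨a, ha⟩ := hR.raise hδ
    have h1 := (ha a).1 (inBlock_self _ _)
    have h2 := le_of_reflTransGen_raise (hRQ.reflTransGen_raise hδ) a
    rw [← he] at h2
    omega

/-- the covering relations of the alt-Tamari poset `Tam^δ_n` are exactly
the δ-rotations. -/
theorem stmt11 (n : ℕ) (δ : ℕ → ℤ) (hδ : IsIncFun δ) (P Q : List Bool)
    (hP : IsDyckWord n P) (hQ : IsDyckWord n Q) :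
    CovIn (DyckSet n) (altLE δ) P Q ↔ DeltaRot δ P Q := by
  constructor
  · rintro ⟨-, -, ⟨hle, hnle⟩, hcov⟩
    rcases hle.eq_or_exists_deltaRot with rfl | ⟨R, hR, hRQ⟩
    · exact absurd hle hnle
    rcases hRQ.eq_or_exists_deltaRot with rfl | ⟨S, hS, hSQ⟩
    · exact hR
    · refine absurd ⟨⟨.single hR, hR.not_altLE hδ⟩, hRQ, fun hQR => ?_⟩ (hcov R (hR.isDyckWord hP))
      exact hS.not_altLE hδ (hSQ.trans hQR)
  · intro h
    refine ⟨hP, hQ, ⟨.single h, h.not_altLE hδ⟩, ?_⟩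
    rintro R - ⟨⟨hPR, hRP⟩, hRQ, hQR⟩
    rcases hPR.eq_or_exists_deltaRot with rfl | ⟨S, hS, hSR⟩
    · exact hRP hPR
    have hSQ : altLE δ S Q := hSR.trans hRQ
    have he := eq_of_raise_of_reflTransGen (hS.raise hδ) (h.raise hδ) (hSQ.reflTransGen_raise hδ)
    obtain rfl := hSQ.eq_of_altBefore_eq hδ he
    exact hQR hSR
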